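/- arXiv:1907.00440 — 2 statements merged into one kernel-verified Lean document; each statement's English description precedes it below -/
import Mathlib

section
/- Guaranteed upper bound with constant one (smooth setting, inequality (2.7) of the paper): Let d ≥ 1, let f : ℝ^d → ℝ, let u : ℝ^d → ℝ be a C² compactly supported function with Δu(x) = −f(x) for all x ∈ ℝ^d, let v : ℝ^d → ℝ be any C¹ compactly supported function (playing the role of the Galerkin approximation u_h), and let q : ℝ^d → ℝ^d be any C¹ compactly supported vector field with div q(x) = −f(x) for all x ∈ ℝ^d. Then ∫_{ℝ^d} ‖∇u(x) − ∇v(x)‖² dx ≤ ∫_{ℝ^d} ‖q(x) − ∇v(x)‖² dx; i.e. ‖q − ∇v‖_{L²} is a reliable bound for the energy error ‖∇u − ∇v‖_{L²} with constant one. -/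
open MeasureTheory RealInnerProductSpace

/-- Divergence of a vector field on `ℝ^d`: `div σ (x) = ∑ i (∂σᵢ/∂xᵢ)(x)`. -/
noncomputable def vdiv {d : ℕ} (σ : EuclideanSpace ℝ (Fin d) → EuclideanSpace ℝ (Fin d))
    (x : EuclideanSpace ℝ (Fin d)) : ℝ :=
  ∑ i : Fin d, fderiv ℝ σ x (EuclideanSpace.single i (1 : ℝ)) i

theorem gub_contDiff_gradient {d : ℕ} {n m : ℕ} (h : m + 1 ≤ n)
    {u : EuclideanSpace ℝ (Fin d) → ℝ} (hu : ContDiff ℝ n u) : ContDiff ℝ m (gradient u) := by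
  have h1 : ContDiff ℝ m (fderiv ℝ u) := hu.fderiv_right (by exact_mod_cast h)
  exact (InnerProductSpace.toDual ℝ (EuclideanSpace ℝ (Fin d))).symm.contDiff.comp h1

theorem gub_supp_gradient {d : ℕ}
    {u : EuclideanSpace ℝ (Fin d) → ℝ} (hu : HasCompactSupport u) :
    HasCompactSupport (gradient u) := by
  have h1 : HasCompactSupport (fderiv ℝ u) := hu.fderiv (𝕜 := ℝ)
  exact h1.comp_left (g := (InnerProductSpace.toDual ℝ (EuclideanSpace ℝ (Fin d))).symm)
    (map_zero _)

theorem gub_sq {d : ℕ} (g : EuclideanSpace ℝ (Fin d) → EuclideanSpace ℝ (Fin d))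
    (hg : Continuous g) (hs : HasCompactSupport g) : Integrable (fun x => ‖g x‖ ^ 2) := by
  have hc : Continuous (fun x => ‖g x‖ ^ 2) := by fun_prop
  have h2 : HasCompactSupport (fun x => ‖g x‖ ^ 2) := by
    refine hs.mono ?_
    intro x hx
    simpa using hx
  exact hc.integrable_of_hasCompactSupport h2

theorem gub_ibp {d : ℕ} (σ : EuclideanSpace ℝ (Fin d) → EuclideanSpace ℝ (Fin d))
    (hσ : ContDiff ℝ 1 σ) (hσs : HasCompactSupport σ)
    (w : EuclideanSpace ℝ (Fin d) → ℝ) (hw : ContDiff ℝ 1 w)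
    (h0 : ∀ x, vdiv σ x = 0) :
    ∫ x, inner ℝ (σ x) (gradient w x) = 0 := by
  have hc : ∀ i, ContDiff ℝ 1 (fun x => σ x i) := fun i =>
    (EuclideanSpace.proj (𝕜 := ℝ) i).contDiff.comp hσ
  have hcs : ∀ i, HasCompactSupport (fun x => σ x i) := fun i =>
    hσs.comp_left (g := fun y : EuclideanSpace ℝ (Fin d) => y i) rfl
  have hfd : ∀ i x e, fderiv ℝ (fun x => σ x i) x e = fderiv ℝ σ x e i := by
    intro i x e
    have := ((EuclideanSpace.proj (𝕜 := ℝ) i).hasFDerivAt.comp x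
      (hσ.differentiable one_ne_zero x).hasFDerivAt).fderiv
    exact congrArg (fun L => L e) this
  have hfc : ∀ i, Continuous fun x => fderiv ℝ (fun x => σ x i) x (EuclideanSpace.single i 1) :=
    fun i => ((hc i).continuous_fderiv one_ne_zero).clm_apply continuous_const
  have hwc : ∀ i : Fin d, Continuous fun x => fderiv ℝ w x (EuclideanSpace.single i 1) :=
    fun i => (hw.continuous_fderiv one_ne_zero).clm_apply continuous_const
  have i1 : ∀ i, Integrable
      (fun x => fderiv ℝ (fun x => σ x i) x (EuclideanSpace.single i 1) * w x) := fun i =>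
    ((hfc i).mul hw.continuous).integrable_of_hasCompactSupport
      (((hcs i).fderiv_apply (𝕜 := ℝ) _).mul_right)
  have i2 : ∀ i, Integrable
      (fun x => σ x i * fderiv ℝ w x (EuclideanSpace.single i 1)) := fun i =>
    ((hc i).continuous.mul (hwc i)).integrable_of_hasCompactSupport (hcs i).mul_right
  have i3 : ∀ i, Integrable (fun x => σ x i * w x) := fun i =>
    ((hc i).continuous.mul hw.continuous).integrable_of_hasCompactSupport (hcs i).mul_right
  have key : ∀ i, ∫ x, σ x i * fderiv ℝ w x (EuclideanSpace.single i 1) =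
      - ∫ x, fderiv ℝ (fun x => σ x i) x (EuclideanSpace.single i 1) * w x := fun i =>
    integral_mul_fderiv_eq_neg_fderiv_mul_of_integrable (i1 i) (i2 i) (i3 i)
      (fun x _ => (hc i).differentiable one_ne_zero x)
      (fun x _ => hw.differentiable one_ne_zero x)
  have e1 : ∀ x, inner ℝ (σ x) (gradient w x) =
      ∑ i, σ x i * fderiv ℝ w x (EuclideanSpace.single i 1) := by
    intro x
    have hg : ∀ y, inner ℝ y (gradient w x) = fderiv ℝ w x y := by
      intro y
      rw [real_inner_comm]
      simp [gradient]
    have hs : σ x = ∑ i, σ x i • EuclideanSpace.single i (1 : ℝ) := by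
      ext j
      simp [Pi.single_apply]
    rw [hg]
    conv_lhs => rw [hs]
    simp
  simp_rw [e1]
  rw [integral_finsetSum _ (fun i _ => i2 i)]
  simp_rw [key]
  rw [Finset.sum_neg_distrib, ← integral_finsetSum _ (fun i _ => i1 i)]
  simp_rw [hfd, ← Finset.sum_mul]
  have : ∀ x, ∑ i, fderiv ℝ σ x (EuclideanSpace.single i 1) i = 0 := h0
  simp [this]

set_option maxHeartbeats 400000 in
/-- Guaranteed upper bound with constant one:
`∫ ‖∇u - ∇v‖² ≤ ∫ ‖q - ∇v‖²` whenever `div q = -f = Δu`. -/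
theorem guaranteed_upper_bound {d : ℕ} (hd : 1 ≤ d)
    (f u : EuclideanSpace ℝ (Fin d) → ℝ)
    (hu : ContDiff ℝ 2 u) (husupp : HasCompactSupport u)
    (hlap : ∀ x, vdiv (gradient u) x = - f x)
    (v : EuclideanSpace ℝ (Fin d) → ℝ)
    (hv : ContDiff ℝ 1 v) (hvsupp : HasCompactSupport v)
    (q : EuclideanSpace ℝ (Fin d) → EuclideanSpace ℝ (Fin d))
    (hq : ContDiff ℝ 1 q) (hqsupp : HasCompactSupport q)
    (hdiv : ∀ x, vdiv q x = - f x) :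
    (∫ x, ‖gradient u x - gradient v x‖ ^ 2) ≤ ∫ x, ‖q x - gradient v x‖ ^ 2 := by
  have hgu : ContDiff ℝ 1 (gradient u) := gub_contDiff_gradient (n := 2) (m := 1) le_rfl hu
  have hgv : Continuous (gradient v) :=
    (gub_contDiff_gradient (n := 1) (m := 0) le_rfl (by exact_mod_cast hv)).continuous
  have hgus := gub_supp_gradient husupp
  have hgvs := gub_supp_gradient hvsupp
  have hu1 : ContDiff ℝ 1 u := hu.of_le (by norm_num)
  have hsub : ∀ x, gradient (fun x => u x - v x) x = gradient u x - gradient v x := by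
    intro x
    have := fderiv_fun_sub (hu1.differentiable one_ne_zero x) (hv.differentiable one_ne_zero x)
    simp [gradient, this]
  have horth := gub_ibp (fun x => q x - gradient u x) (hq.sub hgu) (hqsupp.sub hgus)
    (fun x => u x - v x) (hu1.sub hv) (by
      intro x
      have h1 : fderiv ℝ (fun x => q x - gradient u x) x = fderiv ℝ q x - fderiv ℝ (gradient u) x :=
        fderiv_fun_sub (hq.differentiable one_ne_zero x) (hgu.differentiable one_ne_zero x)
      have h2 := hlap x
      have h3 := hdiv x
      unfold vdiv at *
      simp [h1, Finset.sum_sub_distrib, h2, h3])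
  simp_rw [hsub] at horth
  have c1 := hgu.continuous
  have c2 := hq.continuous
  have I1 := gub_sq (fun x => gradient u x - gradient v x) (c1.sub hgv) (hgus.sub hgvs)
  have I2 := gub_sq (fun x => q x - gradient v x) (c2.sub hgv) (hqsupp.sub hgvs)
  have I0 := gub_sq (fun x => q x - gradient u x) (c2.sub c1) (hqsupp.sub hgus)
  have hex : ∀ x, 2 * inner ℝ (q x - gradient u x) (gradient u x - gradient v x) =
      ‖q x - gradient v x‖ ^ 2 - ‖gradient u x - gradient v x‖ ^ 2
        - ‖q x - gradient u x‖ ^ 2 := by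
    intro x
    have := norm_add_sq_real (q x - gradient u x) (gradient u x - gradient v x)
    rw [sub_add_sub_cancel] at this
    linarith
  have hz : ∫ x, (‖q x - gradient v x‖ ^ 2 - ‖gradient u x - gradient v x‖ ^ 2
        - ‖q x - gradient u x‖ ^ 2) = 0 := by
    simp_rw [← hex]
    rw [integral_const_mul, horth, mul_zero]
  have I21 : Integrable (fun x => ‖q x - gradient v x‖ ^ 2 - ‖gradient u x - gradient v x‖ ^ 2) :=
    I2.sub I1
  rw [integral_sub I21 I0, integral_sub I2 I1] at hz
  have hp : 0 ≤ ∫ x, ‖q x - gradient u x‖ ^ 2 := integral_nonneg fun x => by positivity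
  linarith
end

section
/- Energy bound in the smooth setting (Theorem 2.1, upper inequality): Let d ≥ 1, let f : ℝ^d → ℝ, let u : ℝ^d → ℝ be a C² compactly supported function with Δu(x) = −f(x) for all x ∈ ℝ^d, and let σ* : ℝ^d → ℝ^d be any C¹ compactly supported vector field with div σ*(x) = −f(x) for all x ∈ ℝ^d. Then ∫_{ℝ^d} ‖∇u(x)‖² dx ≤ ∫_{ℝ^d} ‖σ*(x)‖² dx. -/
open MeasureTheory RealInnerProductSpace

/-- Integration by parts: only `u` needs compact support. -/
theorem ibp_aux {d : ℕ} (u : EuclideanSpace ℝ (Fin d) → ℝ)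
    (hu : ContDiff ℝ 1 u) (husupp : HasCompactSupport u)
    (σ : EuclideanSpace ℝ (Fin d) → EuclideanSpace ℝ (Fin d))
    (hσ : ContDiff ℝ 1 σ) :
    (∫ x, inner ℝ (σ x) (gradient u x)) = - ∫ x, u x * vdiv σ x := by
  have hud : Differentiable ℝ u := hu.differentiable (by norm_num)
  have hσd : Differentiable ℝ σ := hσ.differentiable (by norm_num)
  have hcu' : Continuous (fderiv ℝ u) := hu.continuous_fderiv (by norm_num)
  have hcσ' : Continuous (fderiv ℝ σ) := hσ.continuous_fderiv (by norm_num)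
  have hcu := hu.continuous
  have hcσ := hσ.continuous
  have hcomp : ∀ i : Fin d, Continuous (fun x => σ x i) := fun i => by fun_prop
  have hsupp' : ∀ v, HasCompactSupport (fun x => fderiv ℝ u x v) := fun v =>
    husupp.fderiv_apply ℝ v
  have hder : ∀ (i : Fin d) x v, fderiv ℝ (fun y => σ y i) x v = fderiv ℝ σ x v i := by
    intro i x v
    have h := ((EuclideanSpace.proj (𝕜 := ℝ) i).hasFDerivAt (x := σ x)).comp x
      (hσd x).hasFDerivAt
    have h2 : HasFDerivAt (fun y => σ y i)
      ((EuclideanSpace.proj (𝕜 := ℝ) i : EuclideanSpace ℝ (Fin d) →L[ℝ] ℝ).comp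
        (fderiv ℝ σ x)) x := h
    rw [h2.fderiv]
    rfl
  have hc1 : ∀ (i : Fin d) v, Continuous (fun x => fderiv ℝ σ x v i) := fun i v => by fun_prop
  have hI1 : ∀ i : Fin d, Integrable
      (fun x => fderiv ℝ u x (EuclideanSpace.single i (1 : ℝ)) * σ x i) := fun i =>
    Continuous.integrable_of_hasCompactSupport (by fun_prop) ((hsupp' _).mul_right)
  have hI2 : ∀ i : Fin d, Integrable
      (fun x => u x * fderiv ℝ σ x (EuclideanSpace.single i (1 : ℝ)) i) := fun i =>
    Continuous.integrable_of_hasCompactSupport (hcu.mul (hc1 i _)) (husupp.mul_right)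
  have hI3 : ∀ i : Fin d, Integrable (fun x => u x * σ x i) := fun i =>
    Continuous.integrable_of_hasCompactSupport (by fun_prop) (husupp.mul_right)
  have key : ∀ i : Fin d,
      ∫ x, u x * fderiv ℝ σ x (EuclideanSpace.single i (1 : ℝ)) i =
      - ∫ x, fderiv ℝ u x (EuclideanSpace.single i (1 : ℝ)) * σ x i := by
    intro i
    have := integral_mul_fderiv_eq_neg_fderiv_mul_of_integrable (μ := volume)
      (f := u) (g := fun y => σ y i) (v := EuclideanSpace.single i (1 : ℝ))
      (hI1 i) (by simpa only [hder] using hI2 i) (hI3 i) (fun x _ => hud x)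
      (fun x _ => by fun_prop)
    simpa only [hder] using this
  have hinner : ∀ x, inner ℝ (σ x) (gradient u x) =
      ∑ i : Fin d, fderiv ℝ u x (EuclideanSpace.single i (1 : ℝ)) * σ x i := by
    intro x
    rw [PiLp.inner_apply]
    refine Finset.sum_congr rfl fun i _ => ?_
    have : fderiv ℝ u x (EuclideanSpace.single i (1 : ℝ)) = gradient u x i := by
      have h : inner ℝ (gradient u x) (EuclideanSpace.single i (1 : ℝ)) =
          fderiv ℝ u x (EuclideanSpace.single i (1 : ℝ)) := by
        simp [gradient]
      rw [← h, EuclideanSpace.inner_single_right]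
      simp
    rw [this]
    simp
  simp only [hinner, vdiv, Finset.mul_sum]
  rw [integral_finsetSum _ (fun i _ => hI1 i), integral_finsetSum _ (fun i _ => hI2 i),
    ← Finset.sum_neg_distrib]
  refine Finset.sum_congr rfl fun i _ => ?_
  rw [key i, neg_neg]

/-- Energy bound (upper inequality of Theorem 2.1): `∫ ‖∇u‖² ≤ ∫ ‖σ*‖²`. -/
theorem energy_upper_bound {d : ℕ} (hd : 1 ≤ d)
    (f u : EuclideanSpace ℝ (Fin d) → ℝ)
    (hu : ContDiff ℝ 2 u) (husupp : HasCompactSupport u)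
    (hlap : ∀ x, vdiv (gradient u) x = - f x)
    (σstar : EuclideanSpace ℝ (Fin d) → EuclideanSpace ℝ (Fin d))
    (hσ : ContDiff ℝ 1 σstar) (hσsupp : HasCompactSupport σstar)
    (hdiv : ∀ x, vdiv σstar x = - f x) :
    (∫ x, ‖gradient u x‖ ^ 2) ≤ ∫ x, ‖σstar x‖ ^ 2 := by
  have hgrad : ContDiff ℝ 1 (gradient u) := by
    have h : ContDiff ℝ 1 (fderiv ℝ u) := hu.fderiv_right (by norm_num)
    exact (InnerProductSpace.toDual ℝ (EuclideanSpace ℝ (Fin d))).symm.contDiff.comp h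
  have hgsupp : HasCompactSupport (gradient u) := by
    have h := husupp.fderiv ℝ
    exact h.comp_left (g := (InnerProductSpace.toDual ℝ (EuclideanSpace ℝ (Fin d))).symm)
      (map_zero _)
  have hu1 : ContDiff ℝ 1 u := hu.of_le (by norm_num)
  have h1 := ibp_aux u hu1 husupp σstar hσ
  have h2 := ibp_aux u hu1 husupp (gradient u) hgrad
  simp only [hdiv] at h1
  simp only [hlap, real_inner_self_eq_norm_sq] at h2
  have hcg := hgrad.continuous
  have hcs := hσ.continuous
  have hg2 : Integrable (fun x => ‖gradient u x‖ ^ 2) :=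
    Continuous.integrable_of_hasCompactSupport (by fun_prop)
      (hgsupp.comp_left (g := fun v => ‖v‖ ^ 2) (by simp))
  have hs2 : Integrable (fun x => ‖σstar x‖ ^ 2) :=
    Continuous.integrable_of_hasCompactSupport (by fun_prop)
      (hσsupp.comp_left (g := fun v => ‖v‖ ^ 2) (by simp))
  have hsg : Integrable (fun x => (inner ℝ (σstar x) (gradient u x) : ℝ)) := by
    refine Continuous.integrable_of_hasCompactSupport (by fun_prop) ?_
    refine hgsupp.mono fun x hx => ?_
    contrapose! hx
    simp only [Function.mem_support, not_not] at hx ⊢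
    simp [hx]
  have hmono : ∫ x, (2 * inner ℝ (σstar x) (gradient u x) - ‖gradient u x‖ ^ 2)
      ≤ ∫ x, ‖σstar x‖ ^ 2 := by
    refine integral_mono ((hsg.const_mul 2).sub hg2) hs2 fun x => ?_
    have := norm_sub_sq_real (σstar x) (gradient u x)
    have h0 := sq_nonneg ‖σstar x - gradient u x‖
    simp only
    linarith
  rw [integral_sub (hsg.const_mul 2) hg2, integral_const_mul] at hmono
  linarith
end
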